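/- Large-radii estimate: Let d ≥ 1, s > 0, and 0 < p < 1, and let w, v : ℝ^d → ℂ be measurable. Then there is a constant C = C(d, p, s) such that for almost every x ∈ ℝ^d and every A > 0, ∫_A^∞ ( ∫_{|y|<1} |w(x+ry)| · ( |v(x+ry)|^p + |v(x)|^p ) dy )^2 dr / r^{1+2s} ≤ C · A^{−2s} · ( M(|w|^{1/(1−p)})(x) )^{2(1−p)} · ( M(|v|)(x) )^{2p}. -/

import Mathlib

/-!
Write `b` for the volume of the unit ball. The substitution `z = x + r y` turns `∫_{|y|<1} f (x + r y)`
into `b` times the average of `f` over the ball `B(x, r)`, so it is at most `b · M f (x)` for every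
`r > 0` (`lintegral_comp_ball_le`). Hölder's inequality with the conjugate exponents `1/(1-p)` and
`1/p` then bounds `∫_{|y|<1} |w (x + r y)| · |g (y)| ^ p` by
`(b · M(|w|^{1/(1-p)})(x)) ^ (1-p) · (∫_{|y|<1} |g|) ^ p` (`holder_ball_le`). This is used with
`g y = v (x + r y)` and with the constant `g = v x`; in the second case `|v| ≤ M |v|` almost
everywhere, by Lebesgue differentiation (`ae_le_maxFn`). The inner integral is thus at most
`2 b · M(|w|^{1/(1-p)})(x) ^ (1-p) · M(|v|)(x) ^ p`, uniformly in `r`, and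
`∫_A^∞ r ^ (-1-2s) dr = A ^ (-2s) / (2s)` gives the estimate with `C = (2b)² / (2s)`.

Everything is carried out in `[0,∞]`, where each step remains valid when a maximal function is
infinite or zero, so no local integrability of `w` or `v` is needed.
-/

open MeasureTheory ENNReal

/-- The Hardy--Littlewood maximal function, valued in `[0,∞]`. -/
noncomputable def maxFn (d : ℕ) (f : EuclideanSpace ℝ (Fin d) → ℝ≥0∞)
    (x : EuclideanSpace ℝ (Fin d)) : ℝ≥0∞ :=
  ⨆ (ρ : ℝ) (_ : 0 < ρ), (volume (Metric.ball x ρ))⁻¹ * ∫⁻ y in Metric.ball x ρ, f y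

/-- By the change of variables `z = x + r y`, an integral over the unit ball is controlled by the
average over `B(x, r)`, hence by the maximal function, uniformly in `r`. -/
lemma lintegral_comp_ball_le (d : ℕ) {f : EuclideanSpace ℝ (Fin d) → ℝ≥0∞} (hf : Measurable f)
    (x : EuclideanSpace ℝ (Fin d)) {r : ℝ} (hr : 0 < r) :
    ∫⁻ y in Metric.ball (0 : EuclideanSpace ℝ (Fin d)) 1, f (x + r • y) ≤
      volume (Metric.ball (0 : EuclideanSpace ℝ (Fin d)) 1) * maxFn d f x := by
  set b := volume (Metric.ball (0 : EuclideanSpace ℝ (Fin d)) 1) with hb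
  have hb0 : b ≠ 0 := (Metric.measure_ball_pos _ _ one_pos).ne'
  have hbt : b ≠ ∞ := measure_ball_lt_top.ne
  set n := Module.finrank ℝ (EuclideanSpace ℝ (Fin d))
  have hrn : 0 < r ^ n := pow_pos hr n
  have hg : Measurable ((Metric.ball x r).indicator f) := hf.indicator measurableSet_ball
  have key : ∫⁻ y in Metric.ball (0 : EuclideanSpace ℝ (Fin d)) 1, f (x + r • y) =
      ENNReal.ofReal (r ^ n)⁻¹ * ∫⁻ z in Metric.ball x r, f z := by
    rw [← lintegral_indicator measurableSet_ball, ← lintegral_indicator measurableSet_ball,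
      ← lintegral_add_left_eq_self ((Metric.ball x r).indicator f) x]
    have h1 := lintegral_map (μ := (volume : Measure (EuclideanSpace ℝ (Fin d))))
      (hg.comp (measurable_const_add x)) (measurable_const_smul r)
    rw [Measure.map_addHaar_smul _ hr.ne', lintegral_smul_measure,
      abs_of_pos (inv_pos.2 hrn), smul_eq_mul] at h1
    simp only [Function.comp_apply] at h1
    rw [h1]
    refine lintegral_congr fun y => ?_
    have hmem : x + r • y ∈ Metric.ball x r ↔ y ∈ Metric.ball (0 : EuclideanSpace ℝ (Fin d)) 1 := by
      simp only [Metric.mem_ball, dist_eq_norm, add_sub_cancel_left, norm_smul, sub_zero,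
        Real.norm_eq_abs, abs_of_pos hr]
      exact ⟨fun h => by nlinarith, fun h => by nlinarith⟩
    by_cases hy : y ∈ Metric.ball (0 : EuclideanSpace ℝ (Fin d)) 1
    · rw [Set.indicator_of_mem hy, Set.indicator_of_mem (hmem.2 hy)]
    · rw [Set.indicator_of_notMem hy, Set.indicator_of_notMem (fun h => hy (hmem.1 h))]
  have hc : ENNReal.ofReal (r ^ n)⁻¹ = b * (volume (Metric.ball x r))⁻¹ := by
    rw [Measure.addHaar_ball_of_pos _ _ hr, ← hb, ENNReal.mul_inv (Or.inr hbt) (Or.inr hb0),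
      mul_left_comm, ENNReal.mul_inv_cancel hb0 hbt, mul_one, ENNReal.ofReal_inv_of_pos hrn]
  rw [key, hc, mul_assoc]
  gcongr
  exact le_iSup₂ (f := fun (ρ : ℝ) (_ : 0 < ρ) =>
    (volume (Metric.ball x ρ))⁻¹ * ∫⁻ y in Metric.ball x ρ, f y) r hr

lemma maxFn_mono (d : ℕ) {f g : EuclideanSpace ℝ (Fin d) → ℝ≥0∞} (h : ∀ z, f z ≤ g z)
    (x : EuclideanSpace ℝ (Fin d)) : maxFn d f x ≤ maxFn d g x := by
  unfold maxFn
  gcongr with ρ _ z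
  exact h z

/-- Lebesgue differentiation for an integrable function. -/
lemma ae_le_maxFn_of_lintegral_ne_top (d : ℕ) (hd : 1 ≤ d)
    {f : EuclideanSpace ℝ (Fin d) → ℝ≥0∞} (hf : Measurable f) (hfi : ∫⁻ z, f z ≠ ∞) :
    ∀ᵐ x ∂(volume : Measure (EuclideanSpace ℝ (Fin d))), f x ≤ maxFn d f x := by
  have : Nonempty (Fin d) := ⟨⟨0, hd⟩⟩
  filter_upwards [(Besicovitch.vitaliFamily
    (volume : Measure (EuclideanSpace ℝ (Fin d)))).ae_tendsto_lintegral_div' hf hfi] with x hx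
  refine le_of_tendsto (hx.comp (Besicovitch.tendsto_filterAt volume x)) ?_
  filter_upwards [self_mem_nhdsWithin] with r hr
  -- the Besicovitch family consists of closed balls, the maximal function uses open ones
  have hae : Metric.closedBall x r =ᵐ[volume] Metric.ball x r :=
    (ae_eq_of_subset_of_measure_ge Metric.ball_subset_closedBall
      (Measure.addHaar_closedBall_eq_addHaar_ball volume x r).le
      measurableSet_ball.nullMeasurableSet measure_closedBall_lt_top.ne).symm
  simp only [Function.comp_apply]
  rw [setLIntegral_congr hae, measure_congr hae, ENNReal.div_eq_inv_mul]
  exact le_iSup₂ (f := fun (ρ : ℝ) (_ : 0 < ρ) =>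
    (volume (Metric.ball x ρ))⁻¹ * ∫⁻ y in Metric.ball x ρ, f y) r hr

/-- A measurable function is almost everywhere at most its maximal function, with no integrability
assumption: the integrable truncations `min f n` on the ball of radius `n` increase to `f`. -/
lemma ae_le_maxFn (d : ℕ) (hd : 1 ≤ d)
    {f : EuclideanSpace ℝ (Fin d) → ℝ≥0∞} (hf : Measurable f) :
    ∀ᵐ x ∂(volume : Measure (EuclideanSpace ℝ (Fin d))), f x ≤ maxFn d f x := by
  have h : ∀ n : ℕ, ∀ᵐ x ∂(volume : Measure (EuclideanSpace ℝ (Fin d))),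
      (Metric.ball 0 (n : ℝ)).indicator (fun z => min (f z) n) x ≤ maxFn d f x := by
    intro n
    have hm : Measurable ((Metric.ball (0 : EuclideanSpace ℝ (Fin d)) (n : ℝ)).indicator
        (fun z => min (f z) n)) := (hf.min measurable_const).indicator measurableSet_ball
    have hfin : ∫⁻ x, (Metric.ball (0 : EuclideanSpace ℝ (Fin d)) (n : ℝ)).indicator
        (fun z => min (f z) n) x ≠ ∞ := by
      rw [lintegral_indicator measurableSet_ball]
      refine ((lintegral_mono fun z => min_le_right (f z) (n : ℝ≥0∞)).trans_lt ?_).ne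
      rw [setLIntegral_const]
      exact ENNReal.mul_lt_top (ENNReal.natCast_lt_top n) measure_ball_lt_top
    filter_upwards [ae_le_maxFn_of_lintegral_ne_top d hd hm hfin] with x hx
    refine hx.trans (maxFn_mono d (fun z => ?_) x)
    exact Set.indicator_le' (fun _ _ => min_le_left _ _) (fun _ _ => zero_le) z
  filter_upwards [ae_all_iff.2 h] with x hx
  refine le_of_forall_lt fun c hc => ?_
  obtain ⟨c', hcc', hc'⟩ := exists_between hc
  obtain ⟨n₁, hn₁⟩ := ENNReal.exists_nat_gt hc'.ne_top
  obtain ⟨n₂, hn₂⟩ := exists_nat_gt ‖x‖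
  have hmem : x ∈ Metric.ball (0 : EuclideanSpace ℝ (Fin d)) ((max n₁ n₂ : ℕ) : ℝ) := by
    rw [mem_ball_zero_iff]
    exact hn₂.trans_le (by exact_mod_cast le_max_right n₁ n₂)
  have := hx (max n₁ n₂)
  rw [Set.indicator_of_mem hmem] at this
  refine hcc'.trans_le (le_trans (le_min hc'.le (hn₁.le.trans ?_)) this)
  exact_mod_cast le_max_left n₁ n₂

/-- Hölder's inequality on the unit ball with exponents `1/(1-p)` and `1/p`; the first factor is
bounded by the maximal function. -/
lemma holder_ball_le (d : ℕ) {p : ℝ} (hp : 0 < p) (hp1 : p < 1)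
    {W g : EuclideanSpace ℝ (Fin d) → ℝ≥0∞} (hW : Measurable W) (hg : Measurable g)
    (x : EuclideanSpace ℝ (Fin d)) {r : ℝ} (hr : 0 < r) :
    ∫⁻ y in Metric.ball (0 : EuclideanSpace ℝ (Fin d)) 1, W (x + r • y) * g y ^ p ≤
      (volume (Metric.ball (0 : EuclideanSpace ℝ (Fin d)) 1) *
          maxFn d (fun z => W z ^ (1 / (1 - p))) x) ^ (1 - p) *
        (∫⁻ y in Metric.ball (0 : EuclideanSpace ℝ (Fin d)) 1, g y) ^ p := by
  have hq : 0 < 1 - p := by linarith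
  have hconj : (1 / (1 - p)).HolderConjugate (1 / p) := by
    rw [Real.holderConjugate_iff]
    refine ⟨by rw [lt_div_iff₀ hq]; linarith, by simp⟩
  have hWm : Measurable fun y => W (x + r • y) := by fun_prop
  have h := ENNReal.lintegral_mul_le_Lp_mul_Lq
    (volume.restrict (Metric.ball (0 : EuclideanSpace ℝ (Fin d)) 1)) hconj
    hWm.aemeasurable (hg.pow_const p).aemeasurable
  simp only [Pi.mul_apply, one_div_one_div, ← ENNReal.rpow_mul, mul_one_div_cancel hp.ne',
    ENNReal.rpow_one] at h
  refine h.trans ?_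
  gcongr
  exact lintegral_comp_ball_le d (hW.pow_const _) x hr

/-- The inner integral of the theorem is bounded uniformly in `r`. -/
lemma inner_le (d : ℕ) {p : ℝ} (hp : 0 < p) (hp1 : p < 1)
    {W V : EuclideanSpace ℝ (Fin d) → ℝ≥0∞} (hW : Measurable W) (hV : Measurable V)
    {x : EuclideanSpace ℝ (Fin d)} (hx : V x ≤ maxFn d V x) {r : ℝ} (hr : 0 < r) :
    ∫⁻ y in Metric.ball (0 : EuclideanSpace ℝ (Fin d)) 1,
        W (x + r • y) * (V (x + r • y) ^ p + V x ^ p) ≤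
      2 * volume (Metric.ball (0 : EuclideanSpace ℝ (Fin d)) 1) *
        (maxFn d (fun z => W z ^ (1 / (1 - p))) x ^ (1 - p) * maxFn d V x ^ p) := by
  have hWm : Measurable fun y => W (x + r • y) := by fun_prop
  have hVm : Measurable fun y => V (x + r • y) := by fun_prop
  have h1 := holder_ball_le d hp hp1 hW hVm x hr
  have h2 := holder_ball_le d hp hp1 hW (measurable_const (a := V x)) x hr
  have h3 := lintegral_comp_ball_le d hV x hr
  set b := volume (Metric.ball (0 : EuclideanSpace ℝ (Fin d)) 1) with hb
  have hb0 : b ≠ 0 := (Metric.measure_ball_pos _ _ one_pos).ne'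
  have hbt : b ≠ ∞ := measure_ball_lt_top.ne
  have h4 : ∫⁻ _ in Metric.ball (0 : EuclideanSpace ℝ (Fin d)) 1, V x ≤ b * maxFn d V x := by
    rw [setLIntegral_const, mul_comm]
    gcongr
  simp only [mul_add]
  have hWV : Measurable fun y => W (x + r • y) * V (x + r • y) ^ p := hWm.mul (hVm.pow_const p)
  rw [lintegral_add_left hWV]
  set m := maxFn d (fun z => W z ^ (1 / (1 - p))) x
  calc _ ≤ (b * m) ^ (1 - p) * (b * maxFn d V x) ^ p
        + (b * m) ^ (1 - p) * (b * maxFn d V x) ^ p :=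
        add_le_add (h1.trans (by gcongr)) (h2.trans (by gcongr))
    _ = 2 * (b ^ (1 - p) * b ^ p) * (m ^ (1 - p) * maxFn d V x ^ p) := by
        rw [ENNReal.mul_rpow_of_nonneg _ _ (by linarith : (0 : ℝ) ≤ 1 - p),
          ENNReal.mul_rpow_of_nonneg _ _ hp.le]
        ring
    _ = _ := by
        rw [← ENNReal.rpow_add _ _ hb0 hbt, sub_add_cancel, ENNReal.rpow_one]

lemma lintegral_tail {s A : ℝ} (hs : 0 < s) (hA : 0 < A) :
    ∫⁻ r in Set.Ioi A, (ENNReal.ofReal (r ^ (1 + 2 * s)))⁻¹ =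
      ENNReal.ofReal (1 / (2 * s)) * ENNReal.ofReal (A ^ (-(2 * s))) := by
  have hlt : -(1 + 2 * s) < -1 := by linarith
  have h : ∫⁻ r in Set.Ioi A, (ENNReal.ofReal (r ^ (1 + 2 * s)))⁻¹ =
      ∫⁻ r in Set.Ioi A, ENNReal.ofReal (r ^ (-(1 + 2 * s))) := by
    refine setLIntegral_congr_fun measurableSet_Ioi fun r hr => ?_
    have hr0 : 0 < r := hA.trans hr
    rw [Real.rpow_neg hr0.le, ENNReal.ofReal_inv_of_pos (Real.rpow_pos_of_pos hr0 _)]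
  rw [h, ← ofReal_integral_eq_lintegral_ofReal (integrableOn_Ioi_rpow_of_lt hlt hA)
    ((ae_restrict_mem measurableSet_Ioi).mono fun r hr =>
      Real.rpow_nonneg (hA.trans hr).le _), integral_Ioi_rpow_of_lt hlt hA,
    ← ENNReal.ofReal_mul (by positivity)]
  congr 1
  rw [show -(1 + 2 * s) + 1 = -(2 * s) by ring]
  field_simp

/-- Large-radii estimate. -/
theorem large_radii_estimate (d : ℕ) (hd : 1 ≤ d) (s p : ℝ)
    (hs : 0 < s) (hp : 0 < p) (hp1 : p < 1)
    : ∃ C : ℝ, 0 < C ∧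
      ∀ (w v : EuclideanSpace ℝ (Fin d) → ℂ), Measurable w → Measurable v →
        ∀ᵐ x ∂(volume : Measure (EuclideanSpace ℝ (Fin d))), ∀ A : ℝ, 0 < A →
          ∫⁻ r in Set.Ioi A,
              (∫⁻ y in Metric.ball (0 : EuclideanSpace ℝ (Fin d)) 1,
                  (‖w (x + r • y)‖₊ : ℝ≥0∞) *
                    ((‖v (x + r • y)‖₊ : ℝ≥0∞) ^ p + (‖v x‖₊ : ℝ≥0∞) ^ p)) ^ 2
                / ENNReal.ofReal (r ^ (1 + 2 * s))
            ≤ ENNReal.ofReal C * ENNReal.ofReal (A ^ (-(2 * s))) *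
                (maxFn d (fun z => (‖w z‖₊ : ℝ≥0∞) ^ (1 / (1 - p))) x) ^ (2 * (1 - p)) *
                (maxFn d (fun z => (‖v z‖₊ : ℝ≥0∞)) x) ^ (2 * p) := by
  set b := volume (Metric.ball (0 : EuclideanSpace ℝ (Fin d)) 1) with hb
  have hbt : b ≠ ∞ := measure_ball_lt_top.ne
  have hb0 : 0 < b.toReal := ENNReal.toReal_pos (Metric.measure_ball_pos _ _ one_pos).ne' hbt
  refine ⟨(2 * b.toReal) ^ 2 * (1 / (2 * s)), by positivity, fun w v hw hv => ?_⟩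
  have hW : Measurable fun z => (‖w z‖₊ : ℝ≥0∞) := by fun_prop
  have hV : Measurable fun z => (‖v z‖₊ : ℝ≥0∞) := by fun_prop
  have hC : ENNReal.ofReal ((2 * b.toReal) ^ 2 * (1 / (2 * s))) =
      (2 * b) ^ 2 * ENNReal.ofReal (1 / (2 * s)) := by
    rw [ENNReal.ofReal_mul (by positivity), ENNReal.ofReal_pow (by positivity),
      ENNReal.ofReal_mul (by positivity), ENNReal.ofReal_toReal hbt, ENNReal.ofReal_ofNat]
  have hsq : ∀ (a : ℝ≥0∞) (t : ℝ), a ^ (2 * t) = (a ^ t) ^ 2 := fun a t => by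
    rw [mul_comm, ENNReal.rpow_mul, ENNReal.rpow_two]
  filter_upwards [ae_le_maxFn d hd hV] with x hx A hA
  rw [hC, hsq, hsq]
  set m := maxFn d (fun z => (‖w z‖₊ : ℝ≥0∞) ^ (1 / (1 - p))) x
  set n := maxFn d (fun z => (‖v z‖₊ : ℝ≥0∞)) x
  calc _ ≤ ∫⁻ r in Set.Ioi A, (2 * b * (m ^ (1 - p) * n ^ p)) ^ 2 *
          (ENNReal.ofReal (r ^ (1 + 2 * s)))⁻¹ := by
        refine setLIntegral_mono' measurableSet_Ioi fun r hr => ?_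
        rw [div_eq_mul_inv]
        gcongr
        exact inner_le d hp hp1 hW hV hx (hA.trans hr)
    _ = (2 * b * (m ^ (1 - p) * n ^ p)) ^ 2 *
          (ENNReal.ofReal (1 / (2 * s)) * ENNReal.ofReal (A ^ (-(2 * s)))) := by
        rw [lintegral_const_mul _ (by fun_prop), lintegral_tail hs hA]
    _ = _ := by ring
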